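/- arXiv:1503.06826 — 2 statements merged into one kernel-verified Lean document; each statement's English description precedes it below -/
import Mathlib

section
/- Let G be a finite concurrent game in which each player A has a single reachability objective given by a target set T_A ⊆ Stat (a play ρ is winning for A iff Occ(ρ) ∩ T_A ≠ ∅). Let L ⊆ Agt and define T_L = {(s,P) ∈ Stat × 2^Agt | ∃A ∈ P ∩ L, s ∈ T_A}. Then for every state q of the suspect-game arena: Eve has a winning strategy from q in the suspect game H(G,L) if and only if Eve has a strategy from q in the same arena all of whose consistent plays ρ satisfy Occ(ρ) ∩ T_L = ∅ (the safety objective avoiding T_L). -/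
/-- A concurrent game: states, players, actions, allowed actions (nonempty),
a deterministic transition table, and a preference relation for each player
(intended to be a preorder on plays, i.e. on `ℕ → Stat`). -/
structure ConcGame (Stat Agt Act : Type) where
  Allow : Stat → Agt → Set Act
  Allow_nonempty : ∀ s A, (Allow s A).Nonempty
  Tab : Stat → (Agt → Act) → Stat
  pref : Agt → (ℕ → Stat) → (ℕ → Stat) → Prop

namespace ConcGame

variable {Stat Agt Act : Type}

/-- A move is legal at a state if every player's action is allowed there. -/
def Legal (G : ConcGame Stat Agt Act) (s : Stat) (m : Agt → Act) : Prop :=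
  ∀ A, m A ∈ G.Allow s A

/-- A strategy for player `A` maps a history (the list of previously visited
states) together with the current state to an allowed action. -/
def IsStrategy (G : ConcGame Stat Agt Act) (A : Agt) (σ : List Stat → Stat → Act) : Prop :=
  ∀ h s, σ h s ∈ G.Allow s A

/-- A strategy profile assigns a strategy to every player. -/
def IsProfile (G : ConcGame Stat Agt Act) (σ : Agt → List Stat → Stat → Act) : Prop :=
  ∀ A, G.IsStrategy A (σ A)

/-- The run of a strategy profile from a state: current state together with
the history of previously visited states. -/
def run (G : ConcGame Stat Agt Act) (σ : Agt → List Stat → Stat → Act) (s : Stat) :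
    ℕ → Stat × List Stat
  | 0 => (s, [])
  | n + 1 =>
    let p := run G σ s n
    (G.Tab p.1 (fun A => σ A p.2 p.1), p.2 ++ [p.1])

/-- The unique infinite outcome of a strategy profile from a state. -/
def outcome (G : ConcGame Stat Agt Act) (σ : Agt → List Stat → Stat → Act) (s : Stat)
    (n : ℕ) : Stat :=
  (run G σ s n).1

/-- Nash equilibrium from `s`: no player can unilaterally improve her outcome. -/
def IsNash [DecidableEq Agt] (G : ConcGame Stat Agt Act) (s : Stat)
    (σ : Agt → List Stat → Stat → Act) : Prop :=
  G.IsProfile σ ∧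
    ∀ A τ, G.IsStrategy A τ →
      G.pref A (G.outcome (Function.update σ A τ) s) (G.outcome σ s)

end ConcGame

/-- The set of states occurring along a play. -/
def Occ {α : Type} (ρ : ℕ → α) : Set α := Set.range ρ

/-- The set of states occurring infinitely often along a play. -/
def InfOcc {α : Type} (ρ : ℕ → α) : Set α := {x | ∀ n, ∃ m, n ≤ m ∧ ρ m = x}

/-- The set of suspect players for the transition `(s, s')` and the move `m`:
players that could unilaterally deviate from `m` and produce `s'`. -/
def Susp {Stat Agt Act : Type} [DecidableEq Agt] (G : ConcGame Stat Agt Act)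
    (s s' : Stat) (m : Agt → Act) : Set Agt :=
  {A | ∃ a ∈ G.Allow s A, G.Tab s (Function.update m A a) = s'}

/-- A strategy for Eve in the suspect game maps a history of Eve-states and the
current Eve-state to a move; it must propose legal moves. -/
def EveLegal {Stat Agt Act : Type} (G : ConcGame Stat Agt Act)
    (σE : List (Stat × Set Agt) → Stat × Set Agt → (Agt → Act)) : Prop :=
  ∀ h q, G.Legal q.1 (σE h q)

/-- Plays of the suspect game (sequences of Eve-states) consistent with Eve's
strategy `σE` from the Eve-state `q₀`: Adam freely chooses the next state (the
first component), and the suspect sets are updated accordingly. -/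
def SGConsistent {Stat Agt Act : Type} [DecidableEq Agt] (G : ConcGame Stat Agt Act)
    (σE : List (Stat × Set Agt) → Stat × Set Agt → (Agt → Act))
    (q₀ : Stat × Set Agt) (q : ℕ → Stat × Set Agt) : Prop :=
  q 0 = q₀ ∧
    ∀ n, (q (n + 1)).2 =
      (q n).2 ∩ Susp G (q n).1 (q (n + 1)).1 (σE ((List.range n).map q) (q n))

/-- A play of the suspect game `H(G,π)` is winning for Eve iff its first
projection is at most `π` for every player in the limit of the suspect sets. -/
def WinningPlay {Stat Agt Act : Type} (G : ConcGame Stat Agt Act) (π : ℕ → Stat)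
    (q : ℕ → Stat × Set Agt) : Prop :=
  ∀ A ∈ ⋂ n, (q n).2, G.pref A (fun n => (q n).1) π

/-- Eve's strategy is winning from `q₀` in `H(G,π)` if all consistent plays are
winning for Eve. -/
def WinningFrom {Stat Agt Act : Type} [DecidableEq Agt] (G : ConcGame Stat Agt Act)
    (π : ℕ → Stat)
    (σE : List (Stat × Set Agt) → Stat × Set Agt → (Agt → Act))
    (q₀ : Stat × Set Agt) : Prop :=
  ∀ q, SGConsistent G σE q₀ q → WinningPlay G π q

/-- The run of the suspect game from `q₀` when Adam always obeys Eve. -/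
def obeyRun {Stat Agt Act : Type} [DecidableEq Agt] (G : ConcGame Stat Agt Act)
    (σE : List (Stat × Set Agt) → Stat × Set Agt → (Agt → Act))
    (q₀ : Stat × Set Agt) : ℕ → (Stat × Set Agt) × List (Stat × Set Agt)
  | 0 => (q₀, [])
  | n + 1 =>
    let p := obeyRun G σE q₀ n
    let m := σE p.2 p.1
    let t := G.Tab p.1.1 m
    ((t, p.1.2 ∩ Susp G p.1.1 t m), p.2 ++ [p.1])

/-- The outcome of Eve's strategy from `q₀` when Adam always obeys Eve. -/
def obeyOutcome {Stat Agt Act : Type} [DecidableEq Agt] (G : ConcGame Stat Agt Act)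
    (σE : List (Stat × Set Agt) → Stat × Set Agt → (Agt → Act))
    (q₀ : Stat × Set Agt) (n : ℕ) : Stat × Set Agt :=
  (obeyRun G σE q₀ n).1

/-- A trigger profile for the play `π` from `s`: any unilateral deviation yields
an outcome that is at most `π` for the deviator. -/
def IsTrigger {Stat Agt Act : Type} [DecidableEq Agt] (G : ConcGame Stat Agt Act)
    (s : Stat) (π : ℕ → Stat) (σ : Agt → List Stat → Stat → Act) : Prop :=
  G.IsProfile σ ∧
    ∀ A τ, G.IsStrategy A τ → G.pref A (G.outcome (Function.update σ A τ) s) π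

/-!
One strategy of Eve serves both games. Suspect sets only shrink along a play, so a play that
avoids `T_L` is winning. Conversely, at any point of a play Adam may decide to obey Eve from then
on, which freezes the suspect set; hence a visit to `T_L` would leave forever suspect a player of
`L` whose target has already been reached.
-/

section Splice

variable {α β : Type*}

/-- The residual of a history-dependent strategy `σ` after the history `h`: it plays as `σ` does
once `h` has already been seen. -/
def residualStrategy (σ : List α → α → β) (h : List α) : List α → α → β :=
  fun h' => σ (h ++ h')

/-- The sequence that follows `q` before time `n` and `r`, restarted from `0`, from time `n` on.
It is used to continue the play `q` from `q n` by a play `r` with `r 0 = q n`. -/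
def splice (q : ℕ → α) (n : ℕ) (r : ℕ → α) (k : ℕ) : α :=
  if k < n then q k else r (k - n)

variable {q r : ℕ → α} {n k : ℕ}

theorem splice_of_lt (hk : k < n) : splice q n r k = q k := if_pos hk

theorem splice_add : splice q n r (n + k) = r k := by
  simp [splice]

theorem splice_of_le (hr : r 0 = q n) (hk : k ≤ n) : splice q n r k = q k := by
  obtain hlt | rfl := hk.lt_or_eq
  · exact splice_of_lt hlt
  · exact (splice_add (k := 0)).trans hr

theorem map_range_splice_of_le (hk : k ≤ n) :
    (List.range k).map (splice q n r) = (List.range k).map q :=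
  List.map_congr_left fun _ hi => splice_of_lt ((List.mem_range.1 hi).trans_le hk)

theorem map_range_splice_add :
    (List.range (n + k)).map (splice q n r) = (List.range n).map q ++ (List.range k).map r := by
  rw [List.range_add, List.map_append, map_range_splice_of_le le_rfl, List.map_map]
  exact congrArg _ (List.map_congr_left fun _ _ => splice_add)

end Splice

section SuspectGame

variable {Stat Agt Act : Type} {G : ConcGame Stat Agt Act}
  {σE : List (Stat × Set Agt) → Stat × Set Agt → (Agt → Act)}

theorem EveLegal.residualStrategy (hσ : EveLegal G σE) (h : List (Stat × Set Agt)) :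
    EveLegal G (residualStrategy σE h) :=
  fun h' => hσ (h ++ h')

variable [DecidableEq Agt] {q₀ : Stat × Set Agt} {q r : ℕ → Stat × Set Agt}

theorem susp_tab_of_legal {s : Stat} {m : Agt → Act} (hm : G.Legal s m) :
    Susp G s (G.Tab s m) m = Set.univ :=
  Set.eq_univ_of_forall fun A => ⟨m A, hm A, by rw [Function.update_eq_self]⟩

theorem obeyRun_snd (n : ℕ) :
    (obeyRun G σE q₀ n).2 = (List.range n).map (obeyOutcome G σE q₀) := by
  induction n with
  | zero => rfl
  | succ n ih => rw [List.range_succ, List.map_append, ← ih]; rfl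

theorem sgConsistent_obeyOutcome : SGConsistent G σE q₀ (obeyOutcome G σE q₀) :=
  ⟨rfl, fun n => by rw [← obeyRun_snd]; rfl⟩

theorem EveLegal.obeyOutcome_snd (hσ : EveLegal G σE) (n : ℕ) :
    (obeyOutcome G σE q₀ n).2 = q₀.2 := by
  induction n with
  | zero => rfl
  | succ n ih =>
    change (obeyOutcome G σE q₀ n).2 ∩ Susp G _ (G.Tab _ _) _ = q₀.2
    rw [susp_tab_of_legal (hσ _ _), Set.inter_univ, ih]

theorem SGConsistent.antitone_suspects (hq : SGConsistent G σE q₀ q) : Antitone fun n => (q n).2 :=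
  antitone_nat_of_succ_le fun n => (hq.2 n).trans_subset Set.inter_subset_left

theorem sgConsistent_splice {n : ℕ} (hq : SGConsistent G σE q₀ q)
    (hr : SGConsistent G (residualStrategy σE ((List.range n).map q)) (q n) r) :
    SGConsistent G σE q₀ (splice q n r) := by
  refine ⟨(splice_of_le hr.1 n.zero_le).trans hq.1, fun k => ?_⟩
  obtain hk | ⟨j, rfl⟩ := (lt_or_ge k n).imp_right Nat.exists_eq_add_of_le
  · rw [map_range_splice_of_le hk.le, splice_of_le hr.1 hk, splice_of_lt hk]
    exact hq.2 k
  · rw [map_range_splice_add, add_assoc, splice_add, splice_add]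
    exact hr.2 j

theorem SGConsistent.exists_iInter_suspects_eq (hq : SGConsistent G σE q₀ q)
    (hσ : EveLegal G σE) (n : ℕ) :
    ∃ q', SGConsistent G σE q₀ q' ∧ q' n = q n ∧ ⋂ k, (q' k).2 = (q n).2 := by
  let r := obeyOutcome G (residualStrategy σE ((List.range n).map q)) (q n)
  have hq' : SGConsistent G σE q₀ (splice q n r) := sgConsistent_splice hq sgConsistent_obeyOutcome
  refine ⟨_, hq', splice_of_le rfl le_rfl, ?_⟩
  calc ⋂ k, (splice q n r k).2
      = ⋂ k, (splice q n r (k + n)).2 := (hq'.antitone_suspects.iInter_nat_add n).symm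
    _ = ⋂ _ : ℕ, (q n).2 := Set.iInter_congr fun k => by
      rw [add_comm, splice_add, (hσ.residualStrategy _).obeyOutcome_snd]
    _ = (q n).2 := Set.iInter_const _

end SuspectGame

theorem stmt7_general {Stat Agt Act : Type} [DecidableEq Agt] {G : ConcGame Stat Agt Act}
    {σE : List (Stat × Set Agt) → Stat × Set Agt → (Agt → Act)} (hσ : EveLegal G σE)
    (T : Agt → Set Stat) (L : Set Agt) (q₀ : Stat × Set Agt) :
    (∀ q, SGConsistent G σE q₀ q →
        ∀ A ∈ (⋂ n, (q n).2) ∩ L, Occ (fun n => (q n).1) ∩ T A = ∅) ↔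
      ∀ q, SGConsistent G σE q₀ q →
        Occ q ∩ {p : Stat × Set Agt | ∃ A ∈ p.2 ∩ L, p.1 ∈ T A} = ∅ := by
  simp only [Set.eq_empty_iff_forall_notMem]
  constructor
  · rintro hwin q hq _ ⟨⟨n, rfl⟩, A, ⟨hAn, hAL⟩, hAT⟩
    obtain ⟨q', hq', hn, hlim⟩ := hq.exists_iInter_suspects_eq hσ n
    exact hwin q' hq' A ⟨hlim ▸ hAn, hAL⟩ (q n).1 ⟨⟨n, congrArg Prod.fst hn⟩, hAT⟩
  · rintro hsafe q hq A ⟨hA, hAL⟩ _ ⟨⟨n, rfl⟩, hAT⟩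
    exact hsafe q hq (q n) ⟨⟨n, rfl⟩, A, ⟨Set.mem_iInter.1 hA n, hAL⟩, hAT⟩

/-- In a finite game where each player `A` has the single
reachability objective with target `T A`, and for `L ⊆ Agt`, Eve wins the
suspect game `H(G,L)` from an Eve-state `q₀` (every player of the limit suspect
set that belongs to `L` must lose her reachability objective) iff she can win
the safety game avoiding `T_L = {(s,P) | ∃ A ∈ P ∩ L, s ∈ T A}` from `q₀`. -/
theorem stmt7 {Stat Agt Act : Type} [Fintype Stat] [Fintype Agt] [Fintype Act]
    [DecidableEq Agt] (G : ConcGame Stat Agt Act)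
    (T : Agt → Set Stat) (L : Set Agt) (q₀ : Stat × Set Agt) :
    (∃ σE, EveLegal G σE ∧ ∀ q, SGConsistent G σE q₀ q →
        ∀ A ∈ (⋂ n, (q n).2) ∩ L, Occ (fun n => (q n).1) ∩ T A = ∅) ↔
      ∃ σE, EveLegal G σE ∧ ∀ q, SGConsistent G σE q₀ q →
        Occ q ∩ {p : Stat × Set Agt | ∃ A ∈ p.2 ∩ L, p.1 ∈ T A} = ∅ :=
  exists_congr fun _ => and_congr_right fun hσ => stmt7_general hσ T L q₀
end

section
/- Let G and G' be two concurrent games with the same set Agt of players, let s₀ and s₀' be states of G and G' respectively, and let ⊑ be a game simulation between G and G' that is preference-preserving from (s₀, s₀'). If there exists a Nash equilibrium σ in G from s₀, then there exists a Nash equilibrium σ' in G' from s₀' with Out_G(s₀, σ) ⊑ Out_{G'}(s₀', σ') (componentwise). -/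
/-- A play of the transition system underlying `G`, starting at `s₀`. -/
def ConcGame.IsPlayFrom {Stat Agt Act : Type} (G : ConcGame Stat Agt Act)
    (s₀ : Stat) (ρ : ℕ → Stat) : Prop :=
  ρ 0 = s₀ ∧ ∀ n, ∃ m, G.Legal (ρ n) m ∧ G.Tab (ρ n) m = ρ (n + 1)

/-- Game simulation between two concurrent games over the same set of players. -/
def GameSim {Stat Agt Act Stat' Act' : Type} [DecidableEq Agt]
    (G : ConcGame Stat Agt Act) (G' : ConcGame Stat' Agt Act')
    (R : Stat → Stat' → Prop) : Prop :=
  ∀ s s', R s s' → ∀ m, G.Legal s m →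
    ∃ m', G'.Legal s' m' ∧ R (G.Tab s m) (G'.Tab s' m') ∧
      ∀ t', ∃ t, R t t' ∧ Susp G' s' t' m' ⊆ Susp G s t m

/-- A relation between the state spaces of two games is preference-preserving
from `(s₀, s₀')` if componentwise-related plays from these states are compared
identically by every player. -/
def PrefPres {Stat Agt Act Stat' Act' : Type}
    (G : ConcGame Stat Agt Act) (G' : ConcGame Stat' Agt Act')
    (R : Stat → Stat' → Prop) (s₀ : Stat) (s₀' : Stat') : Prop :=
  ∀ ρ₁ ρ₂ ρ'₁ ρ'₂, G.IsPlayFrom s₀ ρ₁ → G.IsPlayFrom s₀ ρ₂ →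
    G'.IsPlayFrom s₀' ρ'₁ → G'.IsPlayFrom s₀' ρ'₂ →
    (∀ i, R (ρ₁ i) (ρ'₁ i)) → (∀ i, R (ρ₂ i) (ρ'₂ i)) →
    ∀ A, (G.pref A ρ₁ ρ₂ ↔ G'.pref A ρ'₁ ρ'₂)

/-!
Call a play of `G` a shadow of a play of `G'` if the two are componentwise related and, at every
step, the players who may have caused the transition in `G'` may also have caused the one in `G`.
The simulation lets a strategy profile `σ'` of `G'` copy a profile `σ` of `G` so that every play of
`G'` has a shadow, with moves compared along `σ'` and `σ`, and the outcome of `σ'` is shadowed by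
that of `σ`. A play arises from a deviation of player `A` exactly when `A` is suspect at each of its
steps. Hence a deviation of `A` from `σ'` is shadowed by a deviation of `A` from `σ`, and
preferences transfer along shadows.
-/

/-- The move that the profile `σ` prescribes at `ρ n` after the history `ρ 0, …, ρ (n - 1)`. -/
def moveAlong {Stat Agt Act : Type} (σ : Agt → List Stat → Stat → Act) (ρ : ℕ → Stat) (n : ℕ) :
    Agt → Act :=
  fun A => σ A ((List.range n).map ρ) (ρ n)

theorem snd_eq_map_range {α : Type*} {q : ℕ → α × List α} (h₀ : (q 0).2 = [])
    (hsucc : ∀ n, (q (n + 1)).2 = (q n).2 ++ [(q n).1]) (n : ℕ) :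
    (q n).2 = (List.range n).map fun i => (q i).1 := by
  induction n with
  | zero => exact h₀
  | succ n ih => rw [hsucc, ih, List.range_succ, List.map_append, List.map_singleton]

theorem moveAlong_congr {Stat Agt Act : Type} (σ : Agt → List Stat → Stat → Act)
    {ρ₁ ρ₂ : ℕ → Stat} {n : ℕ} (h : ∀ i ≤ n, ρ₁ i = ρ₂ i) :
    moveAlong σ ρ₁ n = moveAlong σ ρ₂ n := by
  have history_eq : (List.range n).map ρ₁ = (List.range n).map ρ₂ :=
    List.map_congr_left fun i hi => h i (List.mem_range.mp hi).le
  unfold moveAlong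
  rw [history_eq, h n le_rfl]

theorem moveAlong_update {Stat Agt Act : Type} [DecidableEq Agt]
    (σ : Agt → List Stat → Stat → Act) (A : Agt) (τ : List Stat → Stat → Act)
    (ρ : ℕ → Stat) (n : ℕ) :
    moveAlong (Function.update σ A τ) ρ n =
      Function.update (moveAlong σ ρ n) A (τ ((List.range n).map ρ) (ρ n)) := by
  funext B
  exact Function.apply_update (fun _ f => f ((List.range n).map ρ) (ρ n)) σ A τ B

namespace ConcGame

variable {Stat Agt Act : Type} {G : ConcGame Stat Agt Act}
  {σ : Agt → List Stat → Stat → Act} {s : Stat} {ρ : ℕ → Stat} {A : Agt}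

theorem outcome_succ (G : ConcGame Stat Agt Act) (σ : Agt → List Stat → Stat → Act) (s : Stat)
    (n : ℕ) :
    G.outcome σ s (n + 1) = G.Tab (G.outcome σ s n) (moveAlong σ (G.outcome σ s) n) := by
  have history_eq : (G.run σ s n).2 = (List.range n).map (G.outcome σ s) :=
    snd_eq_map_range (q := G.run σ s) rfl (fun _ => rfl) n
  unfold moveAlong
  rw [← history_eq]
  rfl

theorem eq_outcome_of_step (h₀ : ρ 0 = s)
    (hsucc : ∀ n, ρ (n + 1) = G.Tab (ρ n) (moveAlong σ ρ n)) : ρ = G.outcome σ s := by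
  funext n
  induction n using Nat.strong_induction_on with
  | _ n ih =>
    cases n with
    | zero => exact h₀
    | succ n =>
      rw [hsucc, outcome_succ, ih n n.lt_succ_self,
        moveAlong_congr σ fun i hi => ih i (Nat.lt_succ_of_le hi)]

theorem IsProfile.legal_moveAlong (hσ : G.IsProfile σ) (ρ : ℕ → Stat) (n : ℕ) :
    G.Legal (ρ n) (moveAlong σ ρ n) :=
  fun A => hσ A _ _

theorem IsProfile.isPlayFrom_outcome (hσ : G.IsProfile σ) (s : Stat) :
    G.IsPlayFrom s (G.outcome σ s) :=
  ⟨rfl, fun n => ⟨_, hσ.legal_moveAlong _ n, (outcome_succ G σ s n).symm⟩⟩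

theorem IsProfile.update [DecidableEq Agt] {τ : List Stat → Stat → Act} (hσ : G.IsProfile σ)
    (hτ : G.IsStrategy A τ) : G.IsProfile (Function.update σ A τ) :=
  (Function.forall_update_iff σ fun B υ => G.IsStrategy B υ).mpr ⟨hτ, fun B _ => hσ B⟩

theorem exists_isProfile_moveAlong_eq (G : ConcGame Stat Agt Act) {μ : (ℕ → Stat) → ℕ → Agt → Act}
    (hμ : ∀ ρ₁ ρ₂ n, (∀ i ≤ n, ρ₁ i = ρ₂ i) → μ ρ₁ n = μ ρ₂ n) :
    ∃ σ, G.IsProfile σ ∧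
      ∀ ρ n A, μ ρ n A ∈ G.Allow (ρ n) A → moveAlong σ ρ n A = μ ρ n A := by
  classical
  -- `fun i => h.getD i s` continues the history `h` by staying in `s` forever.
  let σ : Agt → List Stat → Stat → Act := fun A h s =>
    if μ (fun i => h.getD i s) h.length A ∈ G.Allow s A then μ (fun i => h.getD i s) h.length A
    else (G.Allow_nonempty s A).some
  refine ⟨σ, fun A h s => ?_, fun ρ n A hA => ?_⟩
  · dsimp only [σ]
    split_ifs with hA
    · exact hA
    · exact (G.Allow_nonempty s A).some_mem
  · have prefix_eq : μ (fun i => ((List.range n).map ρ).getD i (ρ n)) n = μ ρ n := by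
      refine hμ _ _ n fun i hi => ?_
      rcases hi.lt_or_eq with hlt | rfl
      · simp [hlt]
      · simp
    simp only [moveAlong, σ, List.length_map, List.length_range, prefix_eq, if_pos hA]

section Suspects

variable [DecidableEq Agt]

theorem Legal.mem_susp_tab {m : Agt → Act} (hm : G.Legal s m) (A : Agt) :
    A ∈ Susp G s (G.Tab s m) m :=
  ⟨m A, hm A, by rw [Function.update_eq_self]⟩

theorem IsStrategy.mem_susp_outcome_update {τ : List Stat → Stat → Act} (hτ : G.IsStrategy A τ)
    (σ : Agt → List Stat → Stat → Act) (s : Stat) (n : ℕ) :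
    A ∈ Susp G (G.outcome (Function.update σ A τ) s n)
      (G.outcome (Function.update σ A τ) s (n + 1))
      (moveAlong σ (G.outcome (Function.update σ A τ) s) n) :=
  ⟨_, hτ _ _, by rw [outcome_succ, moveAlong_update]⟩

theorem exists_eq_outcome_update_of_mem_susp (h₀ : ρ 0 = s)
    (hsusp : ∀ n, A ∈ Susp G (ρ n) (ρ (n + 1)) (moveAlong σ ρ n)) :
    ∃ τ, G.IsStrategy A τ ∧ ρ = G.outcome (Function.update σ A τ) s := by
  choose a ha htab using hsusp
  obtain ⟨υ, hυ, hυ_eq⟩ :=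
    G.exists_isProfile_moveAlong_eq (μ := fun _ n _ => a n) fun _ _ _ _ => rfl
  refine ⟨υ A, hυ A, eq_outcome_of_step h₀ fun n => ?_⟩
  have plays_a : υ A ((List.range n).map ρ) (ρ n) = a n := hυ_eq ρ n A (ha n)
  rw [moveAlong_update, plays_a, htab]

end Suspects

end ConcGame

section Shadow

variable {Stat Stat' Agt Act : Type} (next : Stat → Stat' → (Agt → Act) → Stat' → Stat)
  (σ : Agt → List Stat → Stat → Act) (s₀ : Stat) (ρ' : ℕ → Stat')

/-- The play of `G` that follows the play `ρ'` of `G'`, paired at each time with the history of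
previously visited states, as in `ConcGame.run`. From `s`, while `ρ'` moves from `s'` to `t'` and
`σ` prescribes `m`, it moves to `next s s' m t'`. -/
def shadowRun : ℕ → Stat × List Stat
  | 0 => (s₀, [])
  | n + 1 =>
    let p := shadowRun n
    (next p.1 (ρ' n) (fun A => σ A p.2 p.1) (ρ' (n + 1)), p.2 ++ [p.1])

/-- The sequence of states of `shadowRun`. -/
def shadow (n : ℕ) : Stat :=
  (shadowRun next σ s₀ ρ' n).1

theorem shadowRun_eq (n : ℕ) :
    shadowRun next σ s₀ ρ' n =
      (shadow next σ s₀ ρ' n, (List.range n).map (shadow next σ s₀ ρ')) :=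
  Prod.ext rfl (snd_eq_map_range rfl (fun _ => rfl) n)

theorem shadow_succ (n : ℕ) :
    shadow next σ s₀ ρ' (n + 1) =
      next (shadow next σ s₀ ρ' n) (ρ' n) (moveAlong σ (shadow next σ s₀ ρ') n) (ρ' (n + 1)) := by
  rw [shadow, shadowRun, shadowRun_eq]
  rfl

variable {ρ'}

theorem shadow_congr {ρ₂' : ℕ → Stat'} {n : ℕ} (h : ∀ i ≤ n, ρ' i = ρ₂' i) :
    shadow next σ s₀ ρ' n = shadow next σ s₀ ρ₂' n := by
  induction n using Nat.strong_induction_on with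
  | _ n ih =>
    cases n with
    | zero => rfl
    | succ n =>
      have past_eq : ∀ i ≤ n, shadow next σ s₀ ρ' i = shadow next σ s₀ ρ₂' i := fun i hi =>
        ih i (Nat.lt_succ_of_le hi) fun j hj => h j (by omega)
      rw [shadow_succ, shadow_succ, past_eq n le_rfl, moveAlong_congr σ past_eq, h n n.le_succ,
        h (n + 1) le_rfl]

end Shadow

/-- The transition from `s` to `t`, compared with the move `m`, shadows the transition from `s'`
to `t'`, compared with the move `m'`: the targets are related, `m` is obeyed if `m'` is, and every
suspect in `G'` is a suspect in `G`. -/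
structure StepShadow {Stat Agt Act Stat' Act' : Type} [DecidableEq Agt]
    (G : ConcGame Stat Agt Act) (G' : ConcGame Stat' Agt Act') (R : Stat → Stat' → Prop)
    (s : Stat) (s' : Stat') (m : Agt → Act) (m' : Agt → Act') (t : Stat) (t' : Stat') : Prop where
  rel : R t t'
  eq_tab : t' = G'.Tab s' m' → t = G.Tab s m
  susp_subset : Susp G' s' t' m' ⊆ Susp G s t m

/-- The forward half of `PrefPres`: preferences between plays of `G` carry over to related plays
of `G'`. -/
def PrefMono {Stat Agt Act Stat' Act' : Type}
    (G : ConcGame Stat Agt Act) (G' : ConcGame Stat' Agt Act')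
    (R : Stat → Stat' → Prop) (s₀ : Stat) (s₀' : Stat') : Prop :=
  ∀ ρ₁ ρ₂ ρ'₁ ρ'₂, G.IsPlayFrom s₀ ρ₁ → G.IsPlayFrom s₀ ρ₂ →
    G'.IsPlayFrom s₀' ρ'₁ → G'.IsPlayFrom s₀' ρ'₂ →
    (∀ i, R (ρ₁ i) (ρ'₁ i)) → (∀ i, R (ρ₂ i) (ρ'₂ i)) →
    ∀ A, G.pref A ρ₁ ρ₂ → G'.pref A ρ'₁ ρ'₂

section Simulation

variable {Stat Agt Act Stat' Act' : Type} {G : ConcGame Stat Agt Act}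
  {G' : ConcGame Stat' Agt Act'} {R : Stat → Stat' → Prop} {s₀ : Stat} {s₀' : Stat'}
  {σ : Agt → List Stat → Stat → Act}

theorem PrefPres.prefMono (hpp : PrefPres G G' R s₀ s₀') : PrefMono G G' R s₀ s₀' :=
  fun _ _ _ _ h₁ h₂ h₁' h₂' hR₁ hR₂ A => (hpp _ _ _ _ h₁ h₂ h₁' h₂' hR₁ hR₂ A).mp

variable [DecidableEq Agt]

theorem GameSim.exists_stepShadow (hsim : GameSim G G' R) {s : Stat} {s' : Stat'} (hR : R s s')
    {m : Agt → Act} (hm : G.Legal s m) :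
    ∃ m', G'.Legal s' m' ∧ ∀ t', ∃ t, StepShadow G G' R s s' m m' t t' := by
  obtain ⟨m', hm', htab, hsusp⟩ := hsim s s' hR m hm
  refine ⟨m', hm', fun t' => ?_⟩
  by_cases ht' : t' = G'.Tab s' m'
  · exact ⟨G.Tab s m, ht' ▸ htab, fun _ => rfl, fun A _ => hm.mem_susp_tab A⟩
  · obtain ⟨t, hRt, hsub⟩ := hsusp t'
    exact ⟨t, hRt, fun h => absurd h ht', hsub⟩

theorem GameSim.exists_isProfile_forall_stepShadow (hsim : GameSim G G' R) (hR : R s₀ s₀')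
    (hσ : G.IsProfile σ) :
    ∃ σ', G'.IsProfile σ' ∧ ∀ ρ' : ℕ → Stat', ρ' 0 = s₀' → ∃ ρ : ℕ → Stat, ρ 0 = s₀ ∧
      (∀ n, R (ρ n) (ρ' n)) ∧
      ∀ n, StepShadow G G' R (ρ n) (ρ' n) (moveAlong σ ρ n) (moveAlong σ' ρ' n)
        (ρ (n + 1)) (ρ' (n + 1)) := by
  have : Nonempty Stat := ⟨s₀⟩
  have : Nonempty (Agt → Act') := ⟨fun A => (G'.Allow_nonempty s₀' A).some⟩
  have response : ∀ s s' m, R s s' → G.Legal s m →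
      ∃ m', G'.Legal s' m' ∧ ∀ t', ∃ t, StepShadow G G' R s s' m m' t t' :=
    fun _ _ _ h hm => hsim.exists_stepShadow h hm
  choose! reply reply_legal hnext using response
  choose! next hnext using hnext
  let S : (ℕ → Stat') → ℕ → Stat := shadow next σ s₀
  have S_succ : ∀ ρ' n, S ρ' (n + 1) = next (S ρ' n) (ρ' n) (moveAlong σ (S ρ') n) (ρ' (n + 1)) :=
    shadow_succ next σ s₀
  have nonanticipating : ∀ (ρ₁' ρ₂' : ℕ → Stat') n, (∀ i ≤ n, ρ₁' i = ρ₂' i) →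
      reply (S ρ₁' n) (ρ₁' n) (moveAlong σ (S ρ₁') n) =
        reply (S ρ₂' n) (ρ₂' n) (moveAlong σ (S ρ₂') n) := fun ρ₁' ρ₂' n h => by
    have shadow_eq : ∀ i ≤ n, S ρ₁' i = S ρ₂' i := fun i hi =>
      shadow_congr next σ s₀ fun j hj => h j (hj.trans hi)
    rw [shadow_eq n le_rfl, moveAlong_congr σ shadow_eq, h n le_rfl]
  obtain ⟨σ', hσ', hσ'_eq⟩ := G'.exists_isProfile_moveAlong_eq nonanticipating
  refine ⟨σ', hσ', fun ρ' h₀ => ?_⟩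
  have rel : ∀ n, R (S ρ' n) (ρ' n) := fun n => by
    induction n with
    | zero => exact h₀ ▸ hR
    | succ n ih =>
      rw [S_succ]
      exact (hnext _ _ _ ih (hσ.legal_moveAlong _ n) _).rel
  refine ⟨S ρ', rfl, rel, fun n => ?_⟩
  have hm := hσ.legal_moveAlong (S ρ') n
  have obeys : moveAlong σ' ρ' n = reply (S ρ' n) (ρ' n) (moveAlong σ (S ρ') n) :=
    funext fun A => hσ'_eq ρ' n A (reply_legal _ _ _ (rel n) hm A)
  rw [obeys, S_succ]
  exact hnext _ _ _ (rel n) hm _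

theorem GameSim.exists_isProfile_outcome_rel (hsim : GameSim G G' R) (hR : R s₀ s₀')
    (hσ : G.IsProfile σ) :
    ∃ σ', G'.IsProfile σ' ∧ (∀ i, R (G.outcome σ s₀ i) (G'.outcome σ' s₀' i)) ∧
      ∀ A τ', G'.IsStrategy A τ' → ∃ τ, G.IsStrategy A τ ∧
        ∀ i, R (G.outcome (Function.update σ A τ) s₀ i)
          (G'.outcome (Function.update σ' A τ') s₀' i) := by
  obtain ⟨σ', hσ', hshadow⟩ := hsim.exists_isProfile_forall_stepShadow hR hσ
  refine ⟨σ', hσ', ?_, fun A τ' hτ' => ?_⟩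
  · obtain ⟨ρ, h₀, rel, step⟩ := hshadow (G'.outcome σ' s₀') rfl
    have ρ_eq : ρ = G.outcome σ s₀ :=
      ConcGame.eq_outcome_of_step h₀ fun n => (step n).eq_tab (G'.outcome_succ σ' s₀' n)
    exact ρ_eq ▸ rel
  · obtain ⟨ρ, h₀, rel, step⟩ := hshadow (G'.outcome (Function.update σ' A τ') s₀') rfl
    obtain ⟨τ, hτ, rfl⟩ := ConcGame.exists_eq_outcome_update_of_mem_susp h₀ fun n =>
      (step n).susp_subset (hτ'.mem_susp_outcome_update σ' s₀' n)
    exact ⟨τ, hτ, rel⟩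

theorem stmt14_general (hR : R s₀ s₀') (hsim : GameSim G G' R) (hmono : PrefMono G G' R s₀ s₀')
    (hσ : G.IsNash s₀ σ) :
    ∃ σ' : Agt → List Stat' → Stat' → Act', G'.IsNash s₀' σ' ∧
      ∀ i, R (G.outcome σ s₀ i) (G'.outcome σ' s₀' i) := by
  obtain ⟨hprofile, hnash⟩ := hσ
  obtain ⟨σ', hσ', rel, deviation⟩ := hsim.exists_isProfile_outcome_rel hR hprofile
  refine ⟨σ', ⟨hσ', fun A τ' hτ' => ?_⟩, rel⟩
  obtain ⟨τ, hτ, rel_dev⟩ := deviation A τ' hτ'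
  exact hmono _ _ _ _ ((hprofile.update hτ).isPlayFrom_outcome s₀)
    (hprofile.isPlayFrom_outcome s₀) ((hσ'.update hτ').isPlayFrom_outcome s₀')
    (hσ'.isPlayFrom_outcome s₀') rel_dev rel A (hnash A τ hτ)

end Simulation

/-- A preference-preserving game simulation transports Nash
equilibria: if `σ` is a Nash equilibrium of `G` from `s₀`, then `G'` has a Nash
equilibrium `σ'` from `s₀'` whose outcome is componentwise related to that of
`σ`. -/
theorem stmt14 {Stat Agt Act Stat' Act' : Type} [DecidableEq Agt]
    (G : ConcGame Stat Agt Act) (G' : ConcGame Stat' Agt Act')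
    (hrefl : ∀ A χ, G.pref A χ χ)
    (htrans : ∀ A χ₁ χ₂ χ₃, G.pref A χ₁ χ₂ → G.pref A χ₂ χ₃ → G.pref A χ₁ χ₃)
    (hrefl' : ∀ A χ, G'.pref A χ χ)
    (htrans' : ∀ A χ₁ χ₂ χ₃, G'.pref A χ₁ χ₂ → G'.pref A χ₂ χ₃ → G'.pref A χ₁ χ₃)
    (R : Stat → Stat' → Prop) (s₀ : Stat) (s₀' : Stat') (hR : R s₀ s₀')
    (hsim : GameSim G G' R) (hpp : PrefPres G G' R s₀ s₀')
    (σ : Agt → List Stat → Stat → Act) (hσ : G.IsNash s₀ σ) :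
    ∃ σ' : Agt → List Stat' → Stat' → Act', G'.IsNash s₀' σ' ∧
      ∀ i, R (G.outcome σ s₀ i) (G'.outcome σ' s₀' i) :=
  stmt14_general hR hsim hpp.prefMono hσ
end
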